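/- Let G be a finite group all of whose irreducible complex characters are real-valued (for example, a symmetric group), and let V, W, U be finite-dimensional irreducible complex representations of G. Let m denote the multiplicity of U in V ⊗ W, i.e. the natural number m with (1/|G|)·∑_{g∈G} χ_V(g)·χ_W(g)·χ_U(g) = m. Then m ≤ min{dim V, dim W, dim U}. -/

import Mathlib

open CategoryTheory

/-!
Each `V.ρ g` has finite order, hence is diagonalizable with eigenvalues of modulus one. Therefore
`‖χ_V g‖ ≤ dim V`, and `χ g⁻¹` is the conjugate of `χ g`, so that orthonormality gives irreducible
characters mean square one. Estimating one of the three factors by its dimension and the product of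
the other two by AM-GM bounds the mean of `χ_V χ_W χ_U` by each of the three dimensions.
-/

section Eigenbasis

open Module

variable {K M : Type*} [Field K] [AddCommGroup M] [Module K M]

theorem isSemisimple_of_pow_eq_one [FiniteDimensional K M] {f : End K M} {n : ℕ}
    (hn : (n : K) ≠ 0) (hf : f ^ n = 1) : f.IsSemisimple :=
  End.isSemisimple_of_squarefree_aeval_eq_zero
    (Polynomial.X_pow_sub_one_separable_iff.mpr hn).squarefree (by simp [hf])

theorem exists_basis_hasEigenvector_of_isSemisimple [IsAlgClosed K] [FiniteDimensional K M]
    {f : End K M} (hf : f.IsSemisimple) :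
    ∃ (b : Basis (Fin (finrank K M)) K M) (μ : Fin (finrank K M) → K),
      ∀ i, f.HasEigenvector (μ i) (b i) := by
  classical
  have hint : DirectSum.IsInternal f.eigenspace :=
    DirectSum.isInternal_submodule_of_iSupIndep_of_iSup_eq_top f.eigenspaces_iSupIndep
      hf.iSup_eigenspace_eq_top
  let v (μ : K) := finBasis K (f.eigenspace μ)
  let b := hint.collectedBasis v
  have : Fintype (Σ μ, Fin (finrank K (f.eigenspace μ))) := FiniteDimensional.fintypeBasisIndex b
  let e := Fintype.equivFinOfCardEq (finrank_eq_card_basis b).symm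
  refine ⟨b.reindex e, fun i ↦ (e.symm i).1, fun i ↦ ?_⟩
  rw [b.reindex_apply]
  exact ⟨hint.collectedBasis_mem v _, b.ne_zero _⟩

theorem pow_eq_one_of_hasEigenvalue {R N : Type*} [CommRing R] [IsDomain R] [AddCommGroup N]
    [Module R N] [IsTorsionFree R N] {f : End R N} {n : ℕ} (hf : f ^ n = 1) {μ : R}
    (hμ : f.HasEigenvalue μ) : μ ^ n = 1 := by
  obtain ⟨v, hv⟩ := hμ.exists_hasEigenvector
  refine smul_left_injective R hv.2 ?_
  simpa [hf] using (hv.pow_apply n).symm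

theorem trace_eq_sum_of_basis_apply_eq_smul {R N ι : Type*} [CommRing R] [AddCommGroup N]
    [Module R N] [Fintype ι] (b : Basis ι R N) {f : End R N} {μ : ι → R}
    (h : ∀ i, f (b i) = μ i • b i) :
    LinearMap.trace R N f = ∑ i, μ i := by
  classical
  simp [LinearMap.trace_eq_matrix_trace R b, Matrix.trace, LinearMap.toMatrix_apply, h]

end Eigenbasis

section Character

variable {V : Type*} [AddCommGroup V] [Module ℂ V] [FiniteDimensional ℂ V]

theorem exists_basis_hasEigenvector_norm_eq_one {G : Type*} [Monoid G]
    (ρ : Representation ℂ G V) {g : G} (hg : IsOfFinOrder g) :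
    ∃ (b : Module.Basis (Fin (Module.finrank ℂ V)) ℂ V) (μ : Fin (Module.finrank ℂ V) → ℂ),
      (∀ i, ‖μ i‖ = 1) ∧ ∀ i, Module.End.HasEigenvector (ρ g) (μ i) (b i) := by
  obtain ⟨n, hn, hgn⟩ := isOfFinOrder_iff_pow_eq_one.mp hg
  have hρ : ρ g ^ n = 1 := by rw [← map_pow, hgn, map_one]
  obtain ⟨b, μ, hb⟩ := exists_basis_hasEigenvector_of_isSemisimple
    (isSemisimple_of_pow_eq_one (Nat.cast_ne_zero.mpr hn.ne') hρ)
  refine ⟨b, μ, fun i ↦ ?_, hb⟩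
  exact Complex.norm_eq_one_of_pow_eq_one
    (pow_eq_one_of_hasEigenvalue hρ (Module.End.hasEigenvalue_of_hasEigenvector (hb i))) hn.ne'

theorem norm_character_le_finrank {G : Type*} [Monoid G] (ρ : Representation ℂ G V) {g : G}
    (hg : IsOfFinOrder g) : ‖ρ.character g‖ ≤ Module.finrank ℂ V := by
  obtain ⟨b, μ, hμ, hb⟩ := exists_basis_hasEigenvector_norm_eq_one ρ hg
  calc ‖ρ.character g‖ = ‖∑ i, μ i‖ := congrArg norm
        (trace_eq_sum_of_basis_apply_eq_smul b fun i ↦ (hb i).apply_eq_smul)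
    _ ≤ ∑ i, ‖μ i‖ := norm_sum_le _ _
    _ = Module.finrank ℂ V := by simp [hμ]

theorem character_inv_eq_conj {G : Type*} [Group G] (ρ : Representation ℂ G V) {g : G}
    (hg : IsOfFinOrder g) : ρ.character g⁻¹ = starRingEnd ℂ (ρ.character g) := by
  obtain ⟨b, μ, hμ, hb⟩ := exists_basis_hasEigenvector_norm_eq_one ρ hg
  have hinv (i) : ρ g⁻¹ (b i) = (μ i)⁻¹ • b i := by
    have hμi : μ i ≠ 0 := norm_ne_zero_iff.mp (by simp [hμ i])
    rw [eq_inv_smul_iff₀ hμi, ← map_smul, ← (hb i).apply_eq_smul, ρ.inv_self_apply]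
  calc ρ.character g⁻¹ = ∑ i, (μ i)⁻¹ := trace_eq_sum_of_basis_apply_eq_smul b hinv
    _ = ∑ i, starRingEnd ℂ (μ i) := Finset.sum_congr rfl fun i _ ↦ RCLike.inv_eq_conj (hμ i)
    _ = starRingEnd ℂ (∑ i, μ i) := (map_sum _ _ _).symm
    _ = starRingEnd ℂ (ρ.character g) := congrArg _
        (trace_eq_sum_of_basis_apply_eq_smul b fun i ↦ (hb i).apply_eq_smul).symm

end Character

section Irreducible

variable {G : Type*} [Group G] [Fintype G]

theorem sum_norm_sq_character (V : FDRep ℂ G) [Simple V] :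
    ∑ g : G, ‖V.character g‖ ^ 2 = Fintype.card G := by
  have hnorm (g : G) : ((‖V.character g‖ ^ 2 : ℝ) : ℂ) = V.character g * V.character g⁻¹ := by
    have hconj : V.character g⁻¹ = starRingEnd ℂ (V.character g) :=
      character_inv_eq_conj V.ρ (isOfFinOrder_of_finite g)
    rw [hconj]
    exact_mod_cast (Complex.mul_conj' _).symm
  have hcard : (Nat.card G : ℂ) ≠ 0 := Nat.cast_ne_zero.mpr Nat.card_pos.ne'
  have := invertibleOfNonzero hcard
  have h := FDRep.char_orthonormal V V
  rw [if_pos ⟨Iso.refl V⟩, inv_mul_eq_one₀ hcard, Nat.card_eq_fintype_card] at h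
  simp_rw [← hnorm] at h
  exact_mod_cast h.symm

theorem norm_sum_character_mul_mul_le (V W U : FDRep ℂ G) [Simple W] [Simple U] :
    ‖∑ g : G, V.character g * W.character g * U.character g‖ ≤
      Fintype.card G * Module.finrank ℂ V := by
  calc ‖∑ g : G, V.character g * W.character g * U.character g‖
      ≤ ∑ g : G, ‖V.character g‖ * (‖W.character g‖ * ‖U.character g‖) := by
        simpa only [norm_mul, mul_assoc] using norm_sum_le Finset.univ
          fun g ↦ V.character g * W.character g * U.character g
    _ ≤ ∑ g : G, Module.finrank ℂ V * ((‖W.character g‖ ^ 2 + ‖U.character g‖ ^ 2) / 2) := by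
        gcongr with g
        · exact norm_character_le_finrank V.ρ (isOfFinOrder_of_finite g)
        · linarith [two_mul_le_add_sq ‖W.character g‖ ‖U.character g‖]
    _ = Fintype.card G * Module.finrank ℂ V := by
        rw [← Finset.mul_sum, ← Finset.sum_div, Finset.sum_add_distrib, sum_norm_sq_character,
          sum_norm_sq_character]
        ring

theorem le_finrank_of_average_character_mul_mul_eq (V W U : FDRep ℂ G) [Simple W] [Simple U]
    {m : ℕ} (hm : (1 / (Fintype.card G : ℂ)) * ∑ g : G,
        V.character g * W.character g * U.character g = (m : ℂ)) :
    m ≤ Module.finrank ℂ V := by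
  have hG : 0 < (Fintype.card G : ℝ) := Nat.cast_pos.mpr Fintype.card_pos
  have hnorm := congrArg norm hm
  rw [norm_mul, norm_div, norm_one, Complex.norm_natCast, Complex.norm_natCast,
    one_div_mul_eq_div, div_eq_iff hG.ne', mul_comm] at hnorm
  have hle := hnorm ▸ norm_sum_character_mul_mul_le V W U
  exact_mod_cast le_of_mul_le_mul_left hle hG

/-- Here `m` is the multiplicity of the dual of `U` in `V ⊗ W`. -/
theorem multiplicity_min_dim_bound_general (V W U : FDRep ℂ G) [Simple V] [Simple W] [Simple U]
    (m : ℕ) (hm : (1 / (Fintype.card G : ℂ)) * ∑ g : G,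
        V.character g * W.character g * U.character g = (m : ℂ)) :
    m ≤ min (Module.finrank ℂ V) (min (Module.finrank ℂ W) (Module.finrank ℂ U)) := by
  refine le_min (le_finrank_of_average_character_mul_mul_eq V W U hm)
    (le_min (le_finrank_of_average_character_mul_mul_eq W V U ?_)
      (le_finrank_of_average_character_mul_mul_eq U V W ?_)) <;>
    simpa only [mul_comm, mul_left_comm] using hm

end Irreducible

/-- For a finite group `G` all of whose irreducible complex characters are real-valued,
and irreducible finite-dimensional complex representations `V, W, U` of `G`, the
multiplicity `m` of `U` in `V ⊗ W` satisfies `m ≤ min {dim V, dim W, dim U}`. -/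
theorem multiplicity_min_dim_bound (G : Type) [Group G] [Fintype G]
    (hreal : ∀ X : FDRep ℂ G, Simple X → ∀ g : G,
      (starRingEnd ℂ) (X.character g) = X.character g)
    (V W U : FDRep ℂ G) [Simple V] [Simple W] [Simple U] (m : ℕ)
    (hm : (1 / (Fintype.card G : ℂ)) * ∑ g : G,
        V.character g * W.character g * U.character g = (m : ℂ)) :
    m ≤ min (Module.finrank ℂ V) (min (Module.finrank ℂ W) (Module.finrank ℂ U)) :=
  multiplicity_min_dim_bound_general V W U m hm
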